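/- arXiv:1907.00064 — 2 statements merged into one kernel-verified Lean document; each statement's English description precedes it below -/
import Mathlib

section
/- Suppose v_xc : [0,∞) → ℝ satisfies |v_xc(t)| ≤ c_xc(1 + t^{p−1}) for some p ∈ [1, 5/3) and c_xc > 0. Then for all nonnegative ρ ∈ L^p(ℝ³) and all ψ with ρ_ψ = |ψ|² ∈ L¹(ℝ³) ∩ L³(ℝ³): ∫ v_xc(ρ) ρ_ψ ≥ −c_xc(‖ρ_ψ‖₁ + ‖ρ‖_p^{p−1} ‖ρ_ψ‖₁^{(3−p)/(2p)} ‖ρ_ψ‖₃^{3(p−1)/(2p)}). Moreover (Φ, χ) ↦ ∫ v_xc(ρ)|χ|² (with ρ = 2∑|φₖ|²) is continuous on L^{2p}(ℝ³)ⁿ × (L²(ℝ³) ∩ L^{2p}(ℝ³)). -/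
open MeasureTheory Real Filter Set
noncomputable section

/-- Physical space `ℝ³`. -/
abbrev E3 : Type := EuclideanSpace ℝ (Fin 3)

/-- `Lᵖ` norm (for `0 < p < ∞`). -/
def lpnorm (p : ℝ) (ρ : E3 → ℝ) : ℝ := (∫ x, |ρ x| ^ p) ^ (1/p)

/-- electron density `ρ = 2 ∑ₖ |φₖ|²`. -/
def dens {n : ℕ} (Φ : Fin n → E3 → ℝ) (x : E3) : ℝ := 2 * ∑ k, (Φ k x) ^ 2

/-- Three-factor weighted Hölder inequality. -/
theorem holder3 (A B C : E3 → ℝ) (a b c : ℝ) (hA : ∀ x, 0 ≤ A x) (hB : ∀ x, 0 ≤ B x)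
    (hC : ∀ x, 0 ≤ C x) (iA : Integrable A) (iB : Integrable B) (iC : Integrable C)
    (ha : 0 ≤ a) (hb : 0 ≤ b) (hc : 0 ≤ c) (h : a + b + c = 1) :
    Integrable (fun x => A x ^ a * B x ^ b * C x ^ c) ∧
    ∫ x, A x ^ a * B x ^ b * C x ^ c ≤ (∫ x, A x) ^ a * (∫ x, B x) ^ b * (∫ x, C x) ^ c := by
  have hnn : ∀ x, 0 ≤ A x ^ a * B x ^ b * C x ^ c := fun x =>
    mul_nonneg (mul_nonneg (rpow_nonneg (hA x) _) (rpow_nonneg (hB x) _)) (rpow_nonneg (hC x) _)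
  have hIntg : Integrable (fun x => A x ^ a * B x ^ b * C x ^ c) := by
    refine Integrable.mono' (((iA.const_mul a).add (iB.const_mul b)).add (iC.const_mul c)) ?_ ?_
    · exact (((iA.aemeasurable.pow_const a).mul (iB.aemeasurable.pow_const b)).mul
        (iC.aemeasurable.pow_const c)).aestronglyMeasurable
    · refine Eventually.of_forall fun x => ?_
      rw [Real.norm_of_nonneg (hnn x)]
      exact Real.geom_mean_le_arith_mean3_weighted ha hb hc (hA x) (hB x) (hC x) h
  refine ⟨hIntg, ?_⟩
  have key := ENNReal.lintegral_prod_norm_pow_le (μ := (volume : Measure E3)) (Finset.univ : Finset (Fin 3))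
    (f := ![fun x => ENNReal.ofReal (A x), fun x => ENNReal.ofReal (B x),
      fun x => ENNReal.ofReal (C x)]) (p := ![a, b, c])
    (by
      intro i _
      fin_cases i
      · exact iA.aemeasurable.ennreal_ofReal
      · exact iB.aemeasurable.ennreal_ofReal
      · exact iC.aemeasurable.ennreal_ofReal)
    (by simpa [Fin.sum_univ_three] using h)
    (by
      intro i _
      fin_cases i
      · exact ha
      · exact hb
      · exact hc)
  simp only [Fin.prod_univ_three] at key
  change ∫⁻ x, ENNReal.ofReal (A x) ^ a * ENNReal.ofReal (B x) ^ b * ENNReal.ofReal (C x) ^ c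
    ≤ (∫⁻ x, ENNReal.ofReal (A x)) ^ a * (∫⁻ x, ENNReal.ofReal (B x)) ^ b
      * (∫⁻ x, ENNReal.ofReal (C x)) ^ c at key
  have nA : 0 ≤ ∫ x, A x := integral_nonneg hA
  have nB : 0 ≤ ∫ x, B x := integral_nonneg hB
  have nC : 0 ≤ ∫ x, C x := integral_nonneg hC
  have e1 : ∀ x, ENNReal.ofReal (A x) ^ a * ENNReal.ofReal (B x) ^ b * ENNReal.ofReal (C x) ^ c
      = ENNReal.ofReal (A x ^ a * B x ^ b * C x ^ c) := fun x => by
    rw [ENNReal.ofReal_rpow_of_nonneg (hA x) ha, ENNReal.ofReal_rpow_of_nonneg (hB x) hb,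
      ENNReal.ofReal_rpow_of_nonneg (hC x) hc, ← ENNReal.ofReal_mul (rpow_nonneg (hA x) _),
      ← ENNReal.ofReal_mul (mul_nonneg (rpow_nonneg (hA x) _) (rpow_nonneg (hB x) _))]
  simp only [e1] at key
  rw [← ofReal_integral_eq_lintegral_ofReal hIntg (Eventually.of_forall hnn),
    ← ofReal_integral_eq_lintegral_ofReal iA (Eventually.of_forall hA),
    ← ofReal_integral_eq_lintegral_ofReal iB (Eventually.of_forall hB),
    ← ofReal_integral_eq_lintegral_ofReal iC (Eventually.of_forall hC),
    ENNReal.ofReal_rpow_of_nonneg nA ha, ENNReal.ofReal_rpow_of_nonneg nB hb,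
    ENNReal.ofReal_rpow_of_nonneg nC hc, ← ENNReal.ofReal_mul (rpow_nonneg nA _),
    ← ENNReal.ofReal_mul (mul_nonneg (rpow_nonneg nA _) (rpow_nonneg nB _))] at key
  exact (ENNReal.ofReal_le_ofReal_iff (mul_nonneg (mul_nonneg (rpow_nonneg nA _)
    (rpow_nonneg nB _)) (rpow_nonneg nC _))).1 key

theorem lower_bound (vxc : ℝ → ℝ) (c_xc p : ℝ)
    (hp : 1 ≤ p ∧ p < 5/3) (hcxc : 0 < c_xc)
    (hvxcGrow : ∀ t ≥ (0:ℝ), |vxc t| ≤ c_xc * (1 + t ^ (p - 1)))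
    (ρ : E3 → ℝ) (ψ : E3 → ℝ) (hρ : ∀ x, 0 ≤ ρ x)
    (h1 : Integrable (fun x => |ρ x| ^ p))
    (h2 : Integrable (fun x => (ψ x) ^ 2)) (h6 : Integrable (fun x => (ψ x) ^ 6)) :
      (∫ x, vxc (ρ x) * (ψ x) ^ 2) ≥
        -c_xc * (lpnorm 1 (fun x => (ψ x)^2)
          + lpnorm p ρ ^ (p - 1)
            * lpnorm 1 (fun x => (ψ x)^2) ^ ((3 - p)/(2*p))
            * lpnorm 3 (fun x => (ψ x)^2) ^ (3*(p-1)/(2*p))) := by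
  obtain ⟨hp1, hp2⟩ := hp
  have hp0 : 0 < p := by linarith
  have h6n : ∀ x, 0 ≤ ψ x ^ 6 := fun x => by positivity
  have l1 : lpnorm 1 (fun x => (ψ x)^2) = ∫ x, ψ x ^ 2 := by
    simp [lpnorm]
  have l3 : lpnorm 3 (fun x => (ψ x)^2) ^ (3*(p-1)/(2*p)) = (∫ x, ψ x ^ 6) ^ ((p-1)/(2*p)) := by
    have e : ∀ x, |ψ x ^ 2| ^ (3:ℝ) = ψ x ^ 6 := fun x => by
      rw [abs_of_nonneg (sq_nonneg _), show (3:ℝ) = ((3:ℕ):ℝ) by norm_num, rpow_natCast]; ring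
    simp only [lpnorm, e]
    rw [← rpow_mul (integral_nonneg h6n)]
    congr 1
    field_simp
  have lp : lpnorm p ρ ^ (p-1) = (∫ x, |ρ x| ^ p) ^ ((p-1)/p) := by
    simp only [lpnorm]
    rw [← rpow_mul (integral_nonneg fun x => rpow_nonneg (abs_nonneg _) _)]
    congr 1
    field_simp
  rw [l1, l3, lp]
  obtain ⟨hi, hle⟩ := holder3 (fun x => |ρ x| ^ p) (fun x => ψ x ^ 2) (fun x => ψ x ^ 6)
    ((p-1)/p) ((3-p)/(2*p)) ((p-1)/(2*p)) (fun x => rpow_nonneg (abs_nonneg _) _)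
    (fun x => sq_nonneg _) h6n h1 h2 h6
    (div_nonneg (by linarith) (by linarith)) (div_nonneg (by linarith) (by linarith))
    (div_nonneg (by linarith) (by linarith)) (by field_simp; ring)
  have e : ∀ x, (|ρ x| ^ p) ^ ((p-1)/p) * (ψ x ^ 2) ^ ((3-p)/(2*p)) * (ψ x ^ 6) ^ ((p-1)/(2*p))
      = ρ x ^ (p-1) * ψ x ^ 2 := fun x => by
    have e6 : ψ x ^ 6 = (ψ x ^ 2) ^ (3:ℝ) := by
      rw [show (3:ℝ) = ((3:ℕ):ℝ) by norm_num, rpow_natCast]; ring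
    have hs : (3-p)/(2*p) + 3 * ((p-1)/(2*p)) = 1 := by field_simp; ring
    rw [e6, ← rpow_mul (sq_nonneg _), mul_assoc, ← rpow_add_of_nonneg (sq_nonneg _)
      (div_nonneg (by linarith) (by linarith))
      (mul_nonneg (by norm_num) (div_nonneg (by linarith) (by linarith))), hs, rpow_one,
      ← rpow_mul (abs_nonneg _), abs_of_nonneg (hρ x)]
    congr 2
    field_simp
  simp only [e] at hi hle
  set R := (∫ x, |ρ x| ^ p) ^ ((p-1)/p) * (∫ x, ψ x ^ 2) ^ ((3-p)/(2*p))
    * (∫ x, ψ x ^ 6) ^ ((p-1)/(2*p)) with hR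
  have n2 : 0 ≤ ∫ x, ψ x ^ 2 := integral_nonneg fun x => sq_nonneg _
  have nR : 0 ≤ R := le_trans (integral_nonneg fun x =>
    mul_nonneg (rpow_nonneg (hρ x) _) (sq_nonneg _)) hle
  by_cases hv : Integrable (fun x => vxc (ρ x) * (ψ x) ^ 2)
  · have : ∫ x, -c_xc * (ψ x ^ 2 + ρ x ^ (p-1) * ψ x ^ 2) ≤ ∫ x, vxc (ρ x) * (ψ x) ^ 2 := by
      refine integral_mono ((h2.add hi).const_mul _) hv fun x => ?_
      have := (abs_le.1 (hvxcGrow (ρ x) (hρ x))).1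
      have := mul_le_mul_of_nonneg_right this (sq_nonneg (ψ x))
      simp only
      nlinarith
    rw [integral_const_mul, integral_add h2 hi] at this
    nlinarith
  · rw [integral_undef hv]
    have := mul_nonneg hcxc.le (add_nonneg n2 nR)
    linarith

/-- Domination by an integrable function plus an `L¹`-null sequence. -/
theorem tendsto_integral_zero (D S : ℕ → E3 → ℝ) (G : E3 → ℝ)
    (hD0 : ∀ m x, 0 ≤ D m x) (hS0 : ∀ m x, 0 ≤ S m x) (hG0 : ∀ x, 0 ≤ G x) (K : ℝ)
    (hle : ∀ m x, D m x ≤ K * S m x + G x)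
    (hDm : ∀ m, AEStronglyMeasurable (D m) (volume : Measure E3))
    (hS : ∀ m, Integrable (S m)) (hG : Integrable G)
    (hlim : Tendsto (fun m => ∫ x, S m x) atTop (nhds 0)) (hK : 0 ≤ K)
    (hpt : ∀ (ns : ℕ → ℕ) x, Tendsto (fun k => S (ns k) x) atTop (nhds 0) →
      Tendsto (fun k => D (ns k) x) atTop (nhds 0)) :
    Tendsto (fun m => ∫ x, D m x) atTop (nhds 0) := by
  refine tendsto_of_subseq_tendsto fun ns hns => ?_
  have hlim' := hlim.comp hns
  have hmeas : TendstoInMeasure (volume : Measure E3) (fun k => S (ns k)) atTop (fun _ => 0) := by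
    refine tendstoInMeasure_of_tendsto_eLpNorm (p := 1) one_ne_zero
      (fun k => (hS _).aestronglyMeasurable) aestronglyMeasurable_const ?_
    have : ∀ k, eLpNorm (S (ns k) - fun _ => 0) 1 volume
        = ENNReal.ofReal (∫ x, S (ns k) x) := fun k => by
      rw [show (S (ns k) - fun _ => 0) = S (ns k) by ext; simp, eLpNorm_one_eq_lintegral_enorm,
        ← ofReal_integral_norm_eq_lintegral_enorm (hS _)]
      congr 2
      ext x
      exact Real.norm_of_nonneg (hS0 _ _)
    simp only [this]
    simpa using ENNReal.tendsto_ofReal hlim'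
  obtain ⟨ms, hms, hae⟩ := hmeas.exists_seq_tendsto_ae
  refine ⟨ms, ?_⟩
  have hmin : Tendsto (fun k => ∫ x, min (D (ns (ms k)) x) (G x)) atTop (nhds (∫ _ : E3, (0:ℝ))) := by
    refine tendsto_integral_of_dominated_convergence G
      (fun k => (hDm _).inf hG.aestronglyMeasurable) hG ?_ ?_
    · intro k
      refine Eventually.of_forall fun x => ?_
      rw [Real.norm_of_nonneg (le_min (hD0 _ _) (hG0 x))]
      exact min_le_right _ _
    · filter_upwards [hae] with x hx
      have := (hpt (fun k => ns (ms k)) x hx).min (tendsto_const_nhds (x := G x))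
      rwa [min_eq_left (hG0 x)] at this
  have hup := (((hlim'.comp hms.tendsto_atTop).const_mul K).add hmin)
  simp only [integral_zero, mul_zero, add_zero] at hup
  refine squeeze_zero (fun k => integral_nonneg (hD0 _)) (fun k => ?_) hup
  have iD : ∀ m, Integrable (D m) := fun m =>
    Integrable.mono' (((hS m).const_mul K).add hG) (hDm m) (Eventually.of_forall fun x => by
      rw [Real.norm_of_nonneg (hD0 _ _)]; exact hle m x)
  simp only [Function.comp]
  have iM : Integrable (fun x => min (D (ns (ms k)) x) (G x)) := (iD _).inf hG
  rw [← integral_const_mul, ← integral_add ((hS _).const_mul K) iM]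
  refine integral_mono (iD _) (((hS _).const_mul K).add iM) fun x => ?_
  have h1 := hle (ns (ms k)) x
  have h2 := mul_nonneg hK (hS0 (ns (ms k)) x)
  simp only
  rcases le_total (D (ns (ms k)) x) (G x) with h | h
  · rw [min_eq_left h]; linarith
  · rw [min_eq_right h]; linarith

theorem lpnorm_tendsto (q : ℝ) (hq : 0 < q) (f : ℕ → E3 → ℝ)
    (h : Tendsto (fun m => lpnorm q (f m)) atTop (nhds 0)) :
    Tendsto (fun m => ∫ x, |f m x| ^ q) atTop (nhds 0) := by
  have := h.rpow_const (p := q) (Or.inr hq.le)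
  rw [zero_rpow hq.ne'] at this
  refine this.congr fun m => ?_
  rw [lpnorm, ← rpow_mul (integral_nonneg fun x => rpow_nonneg (abs_nonneg _) _)]
  rw [one_div, inv_mul_cancel₀ hq.ne', rpow_one]

theorem abs_rpow_le (q a b : ℝ) (hq : 0 ≤ q) :
    |a| ^ q ≤ 2 ^ q * (|a - b| ^ q + |b| ^ q) := by
  have h : |a| ≤ 2 * max |a - b| |b| := by
    have h1 : |a| ≤ |a - b| + |b| := by
      have := abs_add_le (a - b) b
      simpa using this
    have := le_max_left |a - b| |b|
    have := le_max_right |a - b| |b|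
    linarith
  have hm : 0 ≤ max |a - b| |b| := le_max_of_le_left (abs_nonneg _)
  have h0 := rpow_nonneg (abs_nonneg (a - b)) q
  have h1 := rpow_nonneg (abs_nonneg b) q
  refine (rpow_le_rpow (abs_nonneg _) h hq).trans ?_
  rw [mul_rpow (by norm_num) hm]
  refine mul_le_mul_of_nonneg_left ?_ (by positivity)
  rcases max_choice |a - b| |b| with h | h <;> rw [h] <;> linarith

theorem young_simple (p s t : ℝ) (hp : 1 ≤ p) (hs : 0 ≤ s) (ht : 0 ≤ t) :
    t ^ (p - 1) * s ≤ t ^ p + s ^ p := by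
  have key : ∀ M : ℝ, 0 ≤ M → M ^ (p-1) * M = M ^ p := fun M hM => by
    have := rpow_add_of_nonneg hM (by linarith : 0 ≤ p - 1) (by norm_num : (0:ℝ) ≤ 1)
    rw [rpow_one] at this
    rw [← this]; ring_nf
  have h1 := rpow_nonneg ht p
  have h2 := rpow_nonneg hs p
  rcases le_total t s with h | h
  · have : t ^ (p-1) * s ≤ s ^ (p-1) * s :=
      mul_le_mul_of_nonneg_right (rpow_le_rpow ht h (by linarith)) hs
    rw [key s hs] at this; linarith
  · have : t ^ (p-1) * s ≤ t ^ (p-1) * t :=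
      mul_le_mul_of_nonneg_left h (rpow_nonneg ht _)
    rw [key t ht] at this; linarith

/-- Dominating function. -/
def domS {n : ℕ} (q : ℝ) (Φ : Fin n → E3 → ℝ) (χ : E3 → ℝ) (x : E3) : ℝ :=
  |χ x| ^ (2:ℝ) + |χ x| ^ q + ∑ k, |Φ k x| ^ q

theorem domS_nonneg {n : ℕ} (q : ℝ) (Φ : Fin n → E3 → ℝ) (χ : E3 → ℝ) (x : E3) :
    0 ≤ domS q Φ χ x := by
  have := Finset.sum_nonneg (s := (Finset.univ : Finset (Fin n)))
    (fun k _ => rpow_nonneg (abs_nonneg (Φ k x)) q)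
  have := rpow_nonneg (abs_nonneg (χ x)) q
  have := rpow_nonneg (abs_nonneg (χ x)) 2
  unfold domS
  linarith

theorem dens_nonneg {n : ℕ} (Φ : Fin n → E3 → ℝ) (x : E3) : 0 ≤ dens Φ x := by
  unfold dens
  positivity

theorem sq_rpow (a p : ℝ) : (a ^ 2) ^ p = |a| ^ (2 * p) := by
  rw [rpow_mul (abs_nonneg _), rpow_two, sq_abs]

theorem dens_rpow_le {n : ℕ} (p : ℝ) (hp : 1 ≤ p) (Φ : Fin n → E3 → ℝ) (x : E3) :
    dens Φ x ^ p ≤ 2 ^ p * (n:ℝ) ^ (p-1) * ∑ k, |Φ k x| ^ (2*p) := by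
  unfold dens
  rw [mul_rpow (by norm_num) (by positivity), mul_assoc]
  refine mul_le_mul_of_nonneg_left ?_ (by positivity)
  have := Real.rpow_sum_le_const_mul_sum_rpow_of_nonneg (s := (Finset.univ : Finset (Fin n)))
    (f := fun k => Φ k x ^ 2) hp (fun i _ => sq_nonneg _)
  simpa [sq_rpow] using this

theorem F_bound {n : ℕ} (vxc : ℝ → ℝ) (c_xc p : ℝ) (hp : 1 ≤ p) (hcxc : 0 < c_xc)
    (hvxcGrow : ∀ t ≥ (0:ℝ), |vxc t| ≤ c_xc * (1 + t ^ (p - 1)))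
    (Φ : Fin n → E3 → ℝ) (χ : E3 → ℝ) (x : E3) :
    |vxc (dens Φ x) * χ x ^ 2| ≤ c_xc * (1 + 2 ^ p * (n:ℝ) ^ (p-1)) * domS (2*p) Φ χ x := by
  have h1 := hvxcGrow _ (dens_nonneg Φ x)
  rw [abs_mul, abs_of_nonneg (sq_nonneg (χ x))]
  refine (mul_le_mul_of_nonneg_right h1 (sq_nonneg _)).trans ?_
  rw [mul_assoc, mul_assoc]
  refine mul_le_mul_of_nonneg_left ?_ hcxc.le
  have h2 := young_simple p (χ x ^ 2) (dens Φ x) hp (sq_nonneg _) (dens_nonneg Φ x)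
  have h3 := dens_rpow_le p hp Φ x
  rw [sq_rpow] at h2
  have hL : 0 ≤ 2 ^ p * (n:ℝ) ^ (p-1) := by positivity
  have hs : 0 ≤ ∑ k, |Φ k x| ^ (2*p) := by positivity
  have hq := rpow_nonneg (abs_nonneg (χ x)) (2*p)
  have e2 : |χ x| ^ (2:ℝ) = χ x ^ 2 := by rw [rpow_two, sq_abs]
  unfold domS
  rw [e2]
  have := mul_nonneg hL (add_nonneg (sq_nonneg (χ x)) hq)
  nlinarith

theorem domS_le {n : ℕ} (q : ℝ) (hq : 2 ≤ q) (Φ' Φ : Fin n → E3 → ℝ) (χ' χ : E3 → ℝ) (x : E3) :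
    domS q Φ' χ' x ≤ 2 ^ q * (domS q (fun k x => Φ' k x - Φ k x) (fun x => χ' x - χ x) x
      + domS q Φ χ x) := by
  have h1 := abs_rpow_le 2 (χ' x) (χ x) (by norm_num)
  have h2 := abs_rpow_le q (χ' x) (χ x) (by linarith)
  have h3 : ∑ k, |Φ' k x| ^ q ≤ ∑ k, 2 ^ q * (|Φ' k x - Φ k x| ^ q + |Φ k x| ^ q) :=
    Finset.sum_le_sum fun k _ => abs_rpow_le q (Φ' k x) (Φ k x) (by linarith)
  rw [← Finset.mul_sum, Finset.sum_add_distrib] at h3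
  have h4 : (2:ℝ) ^ (2:ℝ) ≤ 2 ^ q := rpow_le_rpow_of_exponent_le (by norm_num) hq
  have h5 := mul_le_mul_of_nonneg_right h4 (add_nonneg (rpow_nonneg (abs_nonneg (χ' x - χ x)) 2)
    (rpow_nonneg (abs_nonneg (χ x)) 2))
  unfold domS
  linarith

theorem memLp_int {q : ℝ} (hq : 0 < q) {f : E3 → ℝ}
    (hf : MemLp f (ENNReal.ofReal q) (volume : Measure E3)) :
    Integrable (fun x => |f x| ^ q) := by
  have := hf.integrable_norm_rpow (by simpa using hq) ENNReal.ofReal_ne_top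
  rw [ENNReal.toReal_ofReal hq.le] at this
  exact this

theorem domS_int {n : ℕ} {q : ℝ} (hq : 0 < q) {Φ : Fin n → E3 → ℝ} {χ : E3 → ℝ}
    (hΦ : ∀ i, MemLp (Φ i) (ENNReal.ofReal q) (volume : Measure E3))
    (h2 : MemLp χ 2 (volume : Measure E3))
    (hχ : MemLp χ (ENNReal.ofReal q) (volume : Measure E3)) :
    Integrable (domS q Φ χ) :=
  ((memLp_int (by norm_num) (by simpa using h2)).add (memLp_int hq hχ)).add
    (integrable_finsetSum _ fun i _ => memLp_int hq (hΦ i))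

theorem tendsto_of_abs_rpow {q : ℝ} (hq : 0 < q) {f : ℕ → ℝ} {a : ℝ}
    (h : Tendsto (fun k => |f k - a| ^ q) atTop (nhds 0)) : Tendsto f atTop (nhds a) := by
  have := h.rpow_const (p := q⁻¹) (Or.inr (by positivity))
  rw [zero_rpow (by positivity)] at this
  rw [tendsto_iff_norm_sub_tendsto_zero]
  refine this.congr fun k => ?_
  rw [← rpow_mul (abs_nonneg _), mul_inv_cancel₀ hq.ne', rpow_one, Real.norm_eq_abs]

theorem continuity_part (vxc : ℝ → ℝ) (c_xc p : ℝ)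
    (hp : 1 ≤ p) (hcxc : 0 < c_xc)
    (hvxcCont : ContinuousOn vxc (Set.Ici 0))
    (hvxcGrow : ∀ t ≥ (0:ℝ), |vxc t| ≤ c_xc * (1 + t ^ (p - 1)))
    (n : ℕ) (Φm : ℕ → Fin n → E3 → ℝ) (Φ : Fin n → E3 → ℝ)
        (χm : ℕ → E3 → ℝ) (χ : E3 → ℝ)
      (hΦm : ∀ m i, MemLp (Φm m i) (ENNReal.ofReal (2*p)) (volume : Measure E3))
      (hΦ : ∀ i, MemLp (Φ i) (ENNReal.ofReal (2*p)) (volume : Measure E3))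
      (hχm2 : ∀ m, MemLp (χm m) 2 (volume : Measure E3))
      (hχm : ∀ m, MemLp (χm m) (ENNReal.ofReal (2*p)) (volume : Measure E3))
      (hχ2 : MemLp χ 2 (volume : Measure E3))
      (hχ : MemLp χ (ENNReal.ofReal (2*p)) (volume : Measure E3))
      (tΦ : ∀ i, Tendsto (fun m => lpnorm (2*p) (fun x => Φm m i x - Φ i x)) atTop (nhds 0))
      (tχ2 : Tendsto (fun m => lpnorm 2 (fun x => χm m x - χ x)) atTop (nhds 0))
      (tχ : Tendsto (fun m => lpnorm (2*p) (fun x => χm m x - χ x)) atTop (nhds 0)) :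
      Tendsto (fun m => ∫ x, vxc (dens (Φm m) x) * (χm m x) ^ 2) atTop
        (nhds (∫ x, vxc (dens Φ x) * (χ x) ^ 2)) := by
  have hq : 0 < 2 * p := by linarith
  -- continuous extension
  have hw : Continuous (fun t => vxc (max t 0)) :=
    hvxcCont.comp_continuous (by fun_prop) (fun t => Set.mem_Ici.2 (le_max_right _ _))
  have hwd : ∀ (Ψ : Fin n → E3 → ℝ) x, vxc (dens Ψ x) = vxc (max (dens Ψ x) 0) := fun Ψ x => by
    rw [max_eq_left (dens_nonneg Ψ x)]
  have hmeas : ∀ (Ψ : Fin n → E3 → ℝ) (θ : E3 → ℝ),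
      (∀ i, MemLp (Ψ i) (ENNReal.ofReal (2*p)) (volume : Measure E3)) →
      MemLp θ 2 (volume : Measure E3) →
      AEStronglyMeasurable (fun x => vxc (dens Ψ x) * θ x ^ 2) (volume : Measure E3) := by
    intro Ψ θ hΨ hθ
    simp only [hwd]
    refine (hw.comp_aestronglyMeasurable (f := fun x => dens Ψ x) ?_).mul
      (hθ.aestronglyMeasurable.pow 2)
    unfold dens
    exact (Finset.aestronglyMeasurable_fun_sum _
      fun i _ => (hΨ i).aestronglyMeasurable.pow 2).const_mul 2
  set K := c_xc * (1 + 2 ^ p * (n:ℝ) ^ (p-1)) with hKdef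
  have hK : 0 ≤ K := by positivity
  have hIntg : ∀ (Ψ : Fin n → E3 → ℝ) (θ : E3 → ℝ),
      (∀ i, MemLp (Ψ i) (ENNReal.ofReal (2*p)) (volume : Measure E3)) →
      MemLp θ 2 (volume : Measure E3) →
      MemLp θ (ENNReal.ofReal (2*p)) (volume : Measure E3) →
      Integrable (fun x => vxc (dens Ψ x) * θ x ^ 2) := by
    intro Ψ θ hΨ hθ hθq
    exact Integrable.mono' ((domS_int hq hΨ hθ hθq).const_mul K) (hmeas Ψ θ hΨ hθ)
      (Eventually.of_forall fun x => F_bound vxc c_xc p hp hcxc hvxcGrow Ψ θ x)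
  have hF := hIntg Φ χ hΦ hχ2 hχ
  have hFm := fun m => hIntg (Φm m) (χm m) (hΦm m) (hχm2 m) (hχm m)
  let S : ℕ → E3 → ℝ := fun m =>
    domS (2*p) (fun k x => Φm m k x - Φ k x) (fun x => χm m x - χ x)
  have hSint : ∀ m, Integrable (S m) := fun m =>
    domS_int hq (fun i => (hΦm m i).sub (hΦ i)) ((hχm2 m).sub hχ2) ((hχm m).sub hχ)
  have hSlim : Tendsto (fun m => ∫ x, S m x) atTop (nhds 0) := by
    have a1 := lpnorm_tendsto 2 (by norm_num) _ tχ2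
    have a2 := lpnorm_tendsto (2*p) hq _ tχ
    have a3 := tendsto_finsetSum (Finset.univ : Finset (Fin n))
      (fun i _ => lpnorm_tendsto (2*p) hq _ (tΦ i))
    have a4 := (a1.add a2).add a3
    simp only [Finset.sum_const_zero, add_zero] at a4
    refine a4.congr fun m => ?_
    have b1 : Integrable (fun x => |χm m x - χ x| ^ (2:ℝ)) :=
      memLp_int (f := fun x => χm m x - χ x) (by norm_num) (by
        rw [show ENNReal.ofReal 2 = 2 by simp]
        exact (hχm2 m).sub hχ2)
    have b2 : Integrable (fun x => |χm m x - χ x| ^ (2*p)) :=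
      memLp_int hq ((hχm m).sub hχ)
    have b3 : ∀ i, Integrable (fun x => |Φm m i x - Φ i x| ^ (2*p)) := fun i =>
      memLp_int hq ((hΦm m i).sub (hΦ i))
    simp only [S, domS]
    have b12 : Integrable (fun x => |χm m x - χ x| ^ (2:ℝ) + |χm m x - χ x| ^ (2*p)) := b1.add b2
    rw [integral_add b12 (integrable_finsetSum _ fun i _ => b3 i), integral_add b1 b2,
      integral_finsetSum _ fun i _ => b3 i]
  have main := tendsto_integral_zero
    (fun m x => |vxc (dens (Φm m) x) * (χm m x) ^ 2 - vxc (dens Φ x) * (χ x) ^ 2|) S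
    (fun x => (K * 2 ^ (2*p) + K) * domS (2*p) Φ χ x)
    (fun m x => abs_nonneg _) (fun m x => domS_nonneg _ _ _ _)
    (fun x => mul_nonneg (by positivity) (domS_nonneg _ _ _ _)) (K * 2 ^ (2*p))
    (fun m x => by
      have c1 := F_bound vxc c_xc p hp hcxc hvxcGrow (Φm m) (χm m) x
      have c2 := F_bound vxc c_xc p hp hcxc hvxcGrow Φ χ x
      have c3 := mul_le_mul_of_nonneg_left
        (domS_le (2*p) (by linarith) (Φm m) Φ (χm m) χ x) hK
      have c4 := abs_sub (vxc (dens (Φm m) x) * (χm m x) ^ 2) (vxc (dens Φ x) * (χ x) ^ 2)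
      simp only [S]
      rw [← hKdef] at c1 c2
      linarith)
    (fun m => ((hFm m).sub hF).abs.aestronglyMeasurable) hSint
    ((domS_int hq hΦ hχ2 hχ).const_mul _) hSlim (by positivity)
    (fun ns x hx => by
      have d0 : ∀ k, 0 ≤ |χm (ns k) x - χ x| ^ (2:ℝ) := fun k => rpow_nonneg (abs_nonneg _) _
      have d1 : ∀ k, 0 ≤ |χm (ns k) x - χ x| ^ (2*p) := fun k => rpow_nonneg (abs_nonneg _) _
      have d2 : ∀ k i, 0 ≤ |Φm (ns k) i x - Φ i x| ^ (2*p) :=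
        fun k i => rpow_nonneg (abs_nonneg _) _
      have tc : Tendsto (fun k => χm (ns k) x) atTop (nhds (χ x)) := by
        refine tendsto_of_abs_rpow hq (squeeze_zero d1 (fun k => ?_) hx)
        have := Finset.sum_nonneg (s := (Finset.univ : Finset (Fin n))) fun i _ => d2 k i
        have := d0 k
        simp only [S, domS]
        linarith
      have tp : ∀ i, Tendsto (fun k => Φm (ns k) i x) atTop (nhds (Φ i x)) := fun i => by
        refine tendsto_of_abs_rpow hq (squeeze_zero (fun k => d2 k i) (fun k => ?_) hx)
        have := Finset.single_le_sum (s := (Finset.univ : Finset (Fin n)))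
          (fun i _ => d2 k i) (Finset.mem_univ i)
        have := d0 k
        have := d1 k
        simp only [S, domS]
        linarith
      have td : Tendsto (fun k => dens (Φm (ns k)) x) atTop (nhds (dens Φ x)) :=
        (tendsto_finsetSum _ fun i _ => (tp i).pow 2).const_mul 2
      have tv := ((hw.tendsto _).comp td).mul (tc.pow 2)
      simp only [Function.comp_def, ← hwd] at tv
      have := (tv.sub_const (vxc (dens Φ x) * χ x ^ 2)).abs
      simpa using this)
  rw [tendsto_iff_norm_sub_tendsto_zero]
  refine squeeze_zero (fun m => norm_nonneg _) (fun m => ?_) main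
  rw [← integral_sub (hFm m) hF]
  exact norm_integral_le_integral_norm _

/-- if `|v_xc(t)| ≤ c_xc(1 + t^{p-1})` with `p ∈ [1,5/3)`, then for
nonnegative `ρ ∈ Lᵖ` and `ρ_ψ = |ψ|² ∈ L¹ ∩ L³`,
`∫ v_xc(ρ) ρ_ψ ≥ -c_xc (‖ρ_ψ‖₁ + ‖ρ‖_p^{p-1} ‖ρ_ψ‖₁^{(3-p)/(2p)} ‖ρ_ψ‖₃^{3(p-1)/(2p)})`,
and `(Φ,χ) ↦ ∫ v_xc(ρ)|χ|²` (with `ρ = 2∑|φₖ|²`) is continuous on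
`L^{2p}(ℝ³)ⁿ × (L²(ℝ³) ∩ L^{2p}(ℝ³))`. -/
theorem vxc_term_bound_and_continuity
    (vxc : ℝ → ℝ) (c_xc p : ℝ)
    (hp : 1 ≤ p ∧ p < 5/3) (hcxc : 0 < c_xc)
    (hvxcCont : ContinuousOn vxc (Set.Ici 0))
    (hvxcGrow : ∀ t ≥ (0:ℝ), |vxc t| ≤ c_xc * (1 + t ^ (p - 1))) :
    -- the lower bound
    (∀ (ρ : E3 → ℝ) (ψ : E3 → ℝ), (∀ x, 0 ≤ ρ x) →
      Integrable (fun x => |ρ x| ^ p) →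
      Integrable (fun x => (ψ x) ^ 2) → Integrable (fun x => (ψ x) ^ 6) →
      (∫ x, vxc (ρ x) * (ψ x) ^ 2) ≥
        -c_xc * (lpnorm 1 (fun x => (ψ x)^2)
          + lpnorm p ρ ^ (p - 1)
            * lpnorm 1 (fun x => (ψ x)^2) ^ ((3 - p)/(2*p))
            * lpnorm 3 (fun x => (ψ x)^2) ^ (3*(p-1)/(2*p)))) ∧
    -- continuity on L^{2p}ⁿ × (L² ∩ L^{2p})
    (∀ (n : ℕ) (Φm : ℕ → Fin n → E3 → ℝ) (Φ : Fin n → E3 → ℝ)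
        (χm : ℕ → E3 → ℝ) (χ : E3 → ℝ),
      (∀ m i, MemLp (Φm m i) (ENNReal.ofReal (2*p)) (volume : Measure E3)) →
      (∀ i, MemLp (Φ i) (ENNReal.ofReal (2*p)) (volume : Measure E3)) →
      (∀ m, MemLp (χm m) 2 (volume : Measure E3)) →
      (∀ m, MemLp (χm m) (ENNReal.ofReal (2*p)) (volume : Measure E3)) →
      MemLp χ 2 (volume : Measure E3) →
      MemLp χ (ENNReal.ofReal (2*p)) (volume : Measure E3) →
      (∀ i, Tendsto (fun m => lpnorm (2*p) (fun x => Φm m i x - Φ i x)) atTop (nhds 0)) →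
      Tendsto (fun m => lpnorm 2 (fun x => χm m x - χ x)) atTop (nhds 0) →
      Tendsto (fun m => lpnorm (2*p) (fun x => χm m x - χ x)) atTop (nhds 0) →
      Tendsto (fun m => ∫ x, vxc (dens (Φm m) x) * (χm m x) ^ 2) atTop
        (nhds (∫ x, vxc (dens Φ x) * (χ x) ^ 2))) := by
  exact ⟨fun ρ ψ hρ h1 h2 h6 => lower_bound vxc c_xc p hp hcxc hvxcGrow ρ ψ hρ h1 h2 h6,
    fun n Φm Φ χm χ a1 a2 a3 a4 a5 a6 a7 a8 a9 =>
      continuity_part vxc c_xc p hp.1 hcxc hvxcCont hvxcGrow n Φm Φ χm χ a1 a2 a3 a4 a5 a6 a7 a8 a9⟩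
end
end

section
/- The PW92 correlation energy per unit volume e_c(ρ) = ρ·f(r_s)·log(1 + 1/g(r_s)), where r_s = (3/(4πρ))^{1/3}, f(r_s) = −2A(1 + α₁ r_s), g(r_s) = 2A(β₁ r_s^{1/2} + β₂ r_s + β₃ r_s^{3/2} + β₄ r_s²) with constants A, α₁, β₁, β₂, β₃, β₄ > 0, satisfies: (i) e_c extends continuously to ρ = 0 with e_c(0) = 0, and v_c = de_c/dρ is continuous on [0,∞) with v_c(0) = 0; (ii) there is a constant C with |v_c(ρ)| ≤ C(1 + ρ^{1/6}) for all ρ ≥ 0, so assumption |v_xc| ≤ c(1+ρ^{p−1}) holds with p = 7/6; (iii) for every q ∈ (4/3, 3/2), limsup_{ρ→0+} e_c(ρ)/ρ^q < 0. -/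
open MeasureTheory Real Filter Set
noncomputable section

/-- Wigner-Seitz radius `r_s = (3/(4πρ))^{1/3}`. -/
def rs (t : ℝ) : ℝ := (3 / (4 * π * t)) ^ ((1:ℝ)/3)


def GG (A b1 b2 b3 b4 r : ℝ) : ℝ :=
  2 * A * (b1 * r ^ ((1:ℝ)/2) + b2 * r + b3 * r ^ ((3:ℝ)/2) + b4 * r ^ (2:ℝ))

def G1 (A b1 b2 b3 b4 r : ℝ) : ℝ :=
  2 * A * (b1 * (1/2 * r ^ ((1:ℝ)/2)) + b2 * r + b3 * (3/2 * r ^ ((3:ℝ)/2)) + b4 * (2 * r ^ (2:ℝ)))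

def VV (A a1 b1 b2 b3 b4 r : ℝ) : ℝ :=
  -2 * A * (1 + a1 * r) * Real.log (1 + 1 / GG A b1 b2 b3 b4 r)
   + (2 * A * a1 * r / 3) * Real.log (1 + 1 / GG A b1 b2 b3 b4 r)
   + (-2 * A * (1 + a1 * r)) / 3 * (G1 A b1 b2 b3 b4 r
      / (GG A b1 b2 b3 b4 r * (GG A b1 b2 b3 b4 r + 1)))

lemma rpow_deriv (p x : ℝ) (hx : 0 < x) :
    HasDerivAt (fun y : ℝ => y ^ p) (p * x ^ p / x) x := by
  have h := Real.hasDerivAt_rpow_const (x := x) (p := p) (Or.inl hx.ne')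
  rw [Real.rpow_sub_one hx.ne'] at h
  convert h using 1
  ring

lemma rs_pos (t : ℝ) (ht : 0 < t) : 0 < rs t := by
  unfold rs
  positivity

lemma rs_inv (t : ℝ) (ht : 0 < t) : rs t = ((4 * π * t / 3) ^ ((1:ℝ)/3))⁻¹ := by
  unfold rs
  rw [← Real.inv_rpow (by positivity)]
  congr 1
  rw [inv_div]

lemma rs_deriv (t : ℝ) (ht : 0 < t) : HasDerivAt rs (-(rs t) / (3 * t)) t := by
  have hpi := Real.pi_pos
  have h1 : HasDerivAt (fun t : ℝ => 3 / (4 * π * t)) (-(3 / (4 * π * t)) / t) t := by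
    have := ((hasDerivAt_id t).const_mul (4 * π)).inv (by simp; positivity)
    refine HasDerivAt.congr_deriv (f := fun t : ℝ => 3 / (4 * π * t)) (this.const_mul 3) ?_
    simp only [id]
    field_simp
  have h2 := (rpow_deriv ((1:ℝ)/3) (3 / (4 * π * t)) (by positivity)).comp t h1
  refine HasDerivAt.congr_deriv (f := rs) h2 ?_
  have : (3 / (4 * π * t)) ^ ((1:ℝ)/3) = rs t := rfl
  rw [this]
  field_simp

lemma GG_pos (A b1 b2 b3 b4 r : ℝ) (hA : 0 < A) (hb1 : 0 < b1) (hb2 : 0 < b2)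
    (hb3 : 0 < b3) (hb4 : 0 < b4) (hr : 0 < r) : 0 < GG A b1 b2 b3 b4 r := by
  unfold GG
  positivity

lemma GG_deriv (A b1 b2 b3 b4 r : ℝ) (hr : 0 < r) :
    HasDerivAt (GG A b1 b2 b3 b4) (G1 A b1 b2 b3 b4 r / r) r := by
  have h := (((((rpow_deriv ((1:ℝ)/2) r hr).const_mul b1).add
    ((hasDerivAt_id r).const_mul b2)).add ((rpow_deriv ((3:ℝ)/2) r hr).const_mul b3)).add
    ((rpow_deriv (2:ℝ) r hr).const_mul b4)).const_mul (2 * A)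
  refine HasDerivAt.congr_deriv (f := GG A b1 b2 b3 b4) h ?_
  unfold G1
  field_simp

lemma G1_bd (A b1 b2 b3 b4 r : ℝ) (hA : 0 < A) (hb1 : 0 < b1) (hb2 : 0 < b2)
    (hb3 : 0 < b3) (hb4 : 0 < b4) (hr : 0 < r) :
    0 ≤ G1 A b1 b2 b3 b4 r ∧ G1 A b1 b2 b3 b4 r ≤ 2 * GG A b1 b2 b3 b4 r := by
  constructor
  · unfold G1; positivity
  · have h1 : 0 < A * (b1 * r ^ ((1:ℝ)/2)) := by positivity
    have h2 : 0 < A * (b2 * r) := by positivity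
    have h3 : 0 < A * (b3 * r ^ ((3:ℝ)/2)) := by positivity
    unfold G1 GG
    nlinarith

lemma VV_cont (A a1 b1 b2 b3 b4 r : ℝ) (hA : 0 < A) (hb1 : 0 < b1) (hb2 : 0 < b2)
    (hb3 : 0 < b3) (hb4 : 0 < b4) (hr : 0 < r) :
    ContinuousAt (VV A a1 b1 b2 b3 b4) r := by
  have hg := GG_pos A b1 b2 b3 b4 r hA hb1 hb2 hb3 hb4 hr
  have hgc : ContinuousAt (GG A b1 b2 b3 b4) r := (GG_deriv A b1 b2 b3 b4 r hr).continuousAt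
  have hp : ∀ p : ℝ, ContinuousAt (fun y : ℝ => y ^ p) r :=
    fun p => (rpow_deriv p r hr).continuousAt
  have h1c : ContinuousAt (G1 A b1 b2 b3 b4) r := by
    have e1 := hp (1/2)
    have e2 := hp (3/2)
    have e3 := hp 2
    unfold G1
    fun_prop
  have hL : ContinuousAt (fun r => Real.log (1 + 1 / GG A b1 b2 b3 b4 r)) r := by
    refine ContinuousAt.log ?_ (by positivity)
    exact continuousAt_const.add (continuousAt_const.div hgc hg.ne')
  have hq : ContinuousAt (fun r => G1 A b1 b2 b3 b4 r
      / (GG A b1 b2 b3 b4 r * (GG A b1 b2 b3 b4 r + 1))) r := by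
    refine h1c.div (hgc.mul (hgc.add continuousAt_const)) (by positivity)
  unfold VV
  fun_prop

lemma log_bd (x : ℝ) (hx : 0 < x) : 0 ≤ Real.log (1 + 1 / x) ∧ Real.log (1 + 1/x) ≤ 1 / x := by
  have h : 0 < 1 / x := by positivity
  constructor
  · exact Real.log_nonneg (by linarith)
  · have := Real.log_le_sub_one_of_pos (x := 1 + 1/x) (by positivity)
    linarith

lemma log_lb (x : ℝ) (hx : 0 < x) : 1 / (1 + x) ≤ Real.log (1 + 1 / x) := by
  have := Real.one_sub_inv_le_log_of_pos (x := 1 + 1/x) (by positivity)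
  convert this using 1
  field_simp
  ring

lemma VV_bd (A a1 b1 b2 b3 b4 r : ℝ) (hA : 0 < A) (ha1 : 0 < a1) (hb1 : 0 < b1) (hb2 : 0 < b2)
    (hb3 : 0 < b3) (hb4 : 0 < b4) (hr : 0 < r) :
    |VV A a1 b1 b2 b3 b4 r| ≤ 4 * A * (1 + a1 * r) / GG A b1 b2 b3 b4 r := by
  have hg := GG_pos A b1 b2 b3 b4 r hA hb1 hb2 hb3 hb4 hr
  obtain ⟨h1, h2⟩ := G1_bd A b1 b2 b3 b4 r hA hb1 hb2 hb3 hb4 hr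
  obtain ⟨l1, l2⟩ := log_bd _ hg
  unfold VV
  set g := GG A b1 b2 b3 b4 r
  set k := G1 A b1 b2 b3 b4 r
  set L := Real.log (1 + 1 / g)
  have q1 : 0 ≤ k / (g * (g + 1)) := by positivity
  have q2 : k / (g * (g + 1)) ≤ 2 * (1 / g) := by
    rw [div_le_iff₀ (by positivity)]
    have : 2 * (1 / g) * (g * (g+1)) = 2 * g + 2 := by field_simp
    linarith
  set Q := k / (g * (g + 1))
  have har : 0 < a1 * r := by positivity
  have hF : 0 < A * (1 + a1 * r) := by positivity
  have e : 4 * A * (1 + a1 * r) / g = 4 * (A * (1 + a1 * r)) * (1 / g) := by ring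
  rw [e]
  have m1 := mul_le_mul_of_nonneg_left l2 hF.le
  have m2 := mul_le_mul_of_nonneg_left q2 hF.le
  have m3 := mul_nonneg hF.le l1
  have m4 := mul_nonneg hF.le q1
  have m5 : 0 ≤ A * (a1 * r) * L := by positivity
  have m6 : A * (a1 * r) * L ≤ A * (1 + a1 * r) * L := by
    apply mul_le_mul_of_nonneg_right _ l1
    nlinarith
  have m7 := mul_nonneg hF.le (show 0 ≤ 1 / g by positivity)
  rw [abs_le]
  constructor <;> linarith

lemma F_bd1 (A a1 b1 b2 b3 b4 r : ℝ) (hA : 0 < A) (ha1 : 0 < a1) (hb1 : 0 < b1) (hb2 : 0 < b2)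
    (hb3 : 0 < b3) (hb4 : 0 < b4) (hr : 0 < r) :
    4 * A * (1 + a1 * r) / GG A b1 b2 b3 b4 r ≤ 2 / b1 * (r ^ ((1:ℝ)/2))⁻¹ + 2 * a1 / b2 := by
  have hg := GG_pos A b1 b2 b3 b4 r hA hb1 hb2 hb3 hb4 hr
  rw [div_le_iff₀ hg]
  have g1 : 2 * A * b1 * r ^ ((1:ℝ)/2) ≤ GG A b1 b2 b3 b4 r := by
    have h2 : 0 < A * (b2 * r) := by positivity
    have h3 : 0 < A * (b3 * r ^ ((3:ℝ)/2)) := by positivity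
    have h4 : 0 < A * (b4 * r ^ (2:ℝ)) := by positivity
    unfold GG
    nlinarith
  have g2 : 2 * A * b2 * r ≤ GG A b1 b2 b3 b4 r := by
    have h2 : 0 < A * (b1 * r ^ ((1:ℝ)/2)) := by positivity
    have h3 : 0 < A * (b3 * r ^ ((3:ℝ)/2)) := by positivity
    have h4 : 0 < A * (b4 * r ^ (2:ℝ)) := by positivity
    unfold GG
    nlinarith
  have hx : 0 < r ^ ((1:ℝ)/2) := by positivity
  have k1 := mul_le_mul_of_nonneg_left g1 (show 0 ≤ 2 / b1 * (r ^ ((1:ℝ)/2))⁻¹ by positivity)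
  have k2 := mul_le_mul_of_nonneg_left g2 (show 0 ≤ 2 * a1 / b2 by positivity)
  have e1 : 2 / b1 * (r ^ ((1:ℝ)/2))⁻¹ * (2 * A * b1 * r ^ ((1:ℝ)/2)) = 4 * A := by
    field_simp
    ring
  have e2 : 2 * a1 / b2 * (2 * A * b2 * r) = 4 * A * (a1 * r) := by
    field_simp
    ring
  linarith

lemma F_bd2 (A a1 b1 b2 b3 b4 r : ℝ) (hA : 0 < A) (ha1 : 0 < a1) (hb1 : 0 < b1) (hb2 : 0 < b2)
    (hb3 : 0 < b3) (hb4 : 0 < b4) (hr : 0 < r) :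
    4 * A * (1 + a1 * r) / GG A b1 b2 b3 b4 r ≤ 2 / b4 * (r⁻¹ ^ 2 + a1 * r⁻¹) := by
  have hg := GG_pos A b1 b2 b3 b4 r hA hb1 hb2 hb3 hb4 hr
  rw [div_le_iff₀ hg]
  have g1 : 2 * A * b4 * r ^ 2 ≤ GG A b1 b2 b3 b4 r := by
    have h2 : 0 < A * (b2 * r) := by positivity
    have h3 : 0 < A * (b3 * r ^ ((3:ℝ)/2)) := by positivity
    have h4 : 0 < A * (b1 * r ^ ((1:ℝ)/2)) := by positivity
    unfold GG
    rw [Real.rpow_two]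
    nlinarith
  have k1 := mul_le_mul_of_nonneg_left g1 (show 0 ≤ 2 / b4 * (r⁻¹ ^ 2 + a1 * r⁻¹) by positivity)
  have e1 : 2 / b4 * (r⁻¹ ^ 2 + a1 * r⁻¹) * (2 * A * b4 * r ^ 2) = 4 * A * (1 + a1 * r) := by
    field_simp
    ring
  linarith

lemma lim0 (b a1 : ℝ) : Tendsto (fun t => 2 / b * ((rs t)⁻¹ ^ 2 + a1 * (rs t)⁻¹))
    (nhdsWithin 0 (Set.Ioi 0)) (nhds 0) := by
  have h : Tendsto (fun t : ℝ => (4 * π * t / 3) ^ ((1:ℝ)/3)) (nhdsWithin 0 (Set.Ioi 0))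
      (nhds 0) := by
    have hc : Continuous (fun t : ℝ => (4 * π * t / 3) ^ ((1:ℝ)/3)) :=
      Continuous.rpow_const (by fun_prop) (fun _ => Or.inr (by norm_num))
    have := hc.tendsto 0
    simp only [mul_zero, zero_div] at this
    rw [Real.zero_rpow (by norm_num)] at this
    exact this.mono_left nhdsWithin_le_nhds
  have h2 : Tendsto (fun t => (rs t)⁻¹) (nhdsWithin 0 (Set.Ioi 0)) (nhds 0) := by
    refine h.congr' ?_
    filter_upwards [self_mem_nhdsWithin] with t ht
    rw [rs_inv t ht, inv_inv]
  have := ((h2.pow 2).add (h2.const_mul a1)).const_mul (2 / b)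
  simpa using this

lemma K_bd (A b1 b2 b3 b4 r : ℝ) (hA : 0 < A) (hb1 : 0 < b1) (hb2 : 0 < b2)
    (hb3 : 0 < b3) (hb4 : 0 < b4) (hr : 1 ≤ r) :
    1 + GG A b1 b2 b3 b4 r ≤ (1 + 2 * A * (b1 + b2 + b3 + b4)) * r ^ 2 := by
  have p1 : r ^ ((1:ℝ)/2) ≤ r ^ (2:ℝ) := Real.rpow_le_rpow_of_exponent_le hr (by norm_num)
  have p2 : r ^ ((3:ℝ)/2) ≤ r ^ (2:ℝ) := Real.rpow_le_rpow_of_exponent_le hr (by norm_num)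
  have p3 : r ≤ r ^ (2:ℝ) := by rw [Real.rpow_two]; nlinarith
  have p4 : 1 ≤ r ^ (2:ℝ) := hr.trans p3
  rw [← Real.rpow_two]
  unfold GG
  have k1 := mul_le_mul_of_nonneg_left p1 (show 0 ≤ 2 * A * b1 by positivity)
  have k2 := mul_le_mul_of_nonneg_left p3 (show 0 ≤ 2 * A * b2 by positivity)
  have k3 := mul_le_mul_of_nonneg_left p2 (show 0 ≤ 2 * A * b3 by positivity)
  linarith

/-- the PW92 correlation energy per unit volume
`e_c(ρ) = ρ f(r_s) log(1 + 1/g(r_s))` with `f(r) = -2A(1+α₁r)`,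
`g(r) = 2A(β₁r^{1/2} + β₂r + β₃r^{3/2} + β₄r²)` and positive constants satisfies:
(i) `e_c` extends continuously to `ρ = 0` with `e_c(0) = 0`, and `v_c = de_c/dρ` is
continuous on `[0,∞)` with `v_c(0) = 0`;
(ii) `|v_c(ρ)| ≤ C(1 + ρ^{1/6})`, i.e. the growth assumption holds with `p = 7/6`;
(iii) for every `q ∈ (4/3, 3/2)`, `limsup_{ρ→0+} e_c(ρ)/ρ^q < 0`. -/
theorem pw92_satisfies_assumptions
    (A a1 b1 b2 b3 b4 : ℝ)
    (hA : 0 < A) (ha1 : 0 < a1) (hb1 : 0 < b1) (hb2 : 0 < b2)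
    (hb3 : 0 < b3) (hb4 : 0 < b4)
    (f g ec : ℝ → ℝ)
    (hf : f = fun r => -2 * A * (1 + a1 * r))
    (hg : g = fun r => 2 * A * (b1 * r ^ ((1:ℝ)/2) + b2 * r + b3 * r ^ ((3:ℝ)/2)
      + b4 * r ^ (2:ℝ)))
    (hec : ec = fun t => if t ≤ 0 then 0
      else t * f (rs t) * Real.log (1 + 1 / g (rs t))) :
    -- (i) e_c ∈ C¹([0,∞)) with e_c(0) = 0 and v_c(0) = 0, v_c continuous
    (ec 0 = 0 ∧ ContinuousOn ec (Set.Ici 0) ∧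
      ∃ vc : ℝ → ℝ, vc 0 = 0 ∧ ContinuousOn vc (Set.Ici 0) ∧
        (∀ t ∈ Set.Ici (0:ℝ), HasDerivWithinAt ec (vc t) (Set.Ici 0) t) ∧
        -- (ii) the growth bound with p = 7/6
        (∃ C : ℝ, 0 < C ∧ ∀ t ≥ (0:ℝ), |vc t| ≤ C * (1 + t ^ ((1:ℝ)/6)))) ∧
    -- (iii)
    (∀ q : ℝ, 4/3 < q → q < 3/2 →
      Filter.limsup (fun t => ((ec t / t ^ q : ℝ) : EReal))
        (nhdsWithin 0 (Set.Ioi 0)) < 0) := by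
  have hgG : g = GG A b1 b2 b3 b4 := hg
  subst hgG
  clear hg
  have ecpos : ∀ t, 0 < t → ec t = t * (-2 * A * (1 + a1 * rs t)) *
      Real.log (1 + 1 / GG A b1 b2 b3 b4 (rs t)) := by
    intro t ht
    rw [hec]
    simp only [not_le.mpr ht, if_false, hf]
  have ec0 : ec 0 = 0 := by rw [hec]; simp
  clear hec hf
  have hder : ∀ t, 0 < t → HasDerivAt ec (VV A a1 b1 b2 b3 b4 (rs t)) t := by
    intro t ht
    have hr := rs_pos t ht
    have hgp := GG_pos A b1 b2 b3 b4 (rs t) hA hb1 hb2 hb3 hb4 hr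
    have d1 := rs_deriv t ht
    have d2 : HasDerivAt (fun t => GG A b1 b2 b3 b4 (rs t)) _ t :=
      (GG_deriv A b1 b2 b3 b4 (rs t) hr).comp t d1
    have d3 := ((d2.inv hgp.ne').const_add 1).log (by simp; positivity)
    have d4 := ((hasDerivAt_id t).mul (((d1.const_mul a1).const_add 1).const_mul (-2 * A))).mul d3
    have d5 := d4.congr_of_eventuallyEq (f₁ := ec) (by
      filter_upwards [Ioi_mem_nhds ht] with x hx
      rw [ecpos x hx]
      simp)
    refine d5.congr_deriv ?_
    simp only [VV, id, one_div, Pi.inv_apply, Pi.mul_apply]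
    field_simp
  have hvb : ∀ t, 0 < t → |VV A a1 b1 b2 b3 b4 (rs t)| ≤
      2 / b4 * ((rs t)⁻¹ ^ 2 + a1 * (rs t)⁻¹) := fun t ht =>
    (VV_bd A a1 b1 b2 b3 b4 _ hA ha1 hb1 hb2 hb3 hb4 (rs_pos t ht)).trans
      (F_bd2 A a1 b1 b2 b3 b4 _ hA ha1 hb1 hb2 hb3 hb4 (rs_pos t ht))
  have heb : ∀ t, 0 < t → |ec t / t| ≤ 2 / b4 * ((rs t)⁻¹ ^ 2 + a1 * (rs t)⁻¹) := by
    intro t ht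
    have hr := rs_pos t ht
    have hgp := GG_pos A b1 b2 b3 b4 (rs t) hA hb1 hb2 hb3 hb4 hr
    refine le_trans ?_ (F_bd2 A a1 b1 b2 b3 b4 _ hA ha1 hb1 hb2 hb3 hb4 hr)
    obtain ⟨l1, l2⟩ := log_bd _ hgp
    rw [ecpos t ht]
    set L := Real.log (1 + 1 / GG A b1 b2 b3 b4 (rs t))
    have e : t * (-2 * A * (1 + a1 * rs t)) * L / t = -(2 * (A * (1 + a1 * rs t)) * L) := by
      field_simp
    have e2 : 4 * A * (1 + a1 * rs t) / GG A b1 b2 b3 b4 (rs t) =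
      4 * (A * (1 + a1 * rs t)) * (1 / GG A b1 b2 b3 b4 (rs t)) := by ring
    have hF : 0 < A * (1 + a1 * rs t) := by positivity
    rw [e, e2, abs_neg, abs_of_nonneg (by positivity)]
    have m1 := mul_le_mul_of_nonneg_left l2 hF.le
    have m2 := mul_nonneg hF.le l1
    linarith
  have hd0 : HasDerivWithinAt ec 0 (Set.Ici 0) 0 := by
    rw [hasDerivWithinAt_iff_tendsto_slope, Set.Ici_sdiff_left]
    refine squeeze_zero_norm' ?_ (lim0 b4 a1)
    filter_upwards [self_mem_nhdsWithin] with t ht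
    have := heb t ht
    rw [slope_def_field, ec0, sub_zero, sub_zero]
    exact this
  have hd : ∀ t ∈ Set.Ici (0:ℝ), HasDerivWithinAt ec
      ((fun t => if t ≤ 0 then 0 else VV A a1 b1 b2 b3 b4 (rs t)) t) (Set.Ici 0) t := by
    intro t ht
    rcases eq_or_lt_of_le (show (0:ℝ) ≤ t from ht) with h | h
    · subst h
      simpa using hd0
    · simp only [not_le.mpr h, if_false]
      exact (hder t h).hasDerivWithinAt
  refine ⟨⟨ec0, fun t ht => (hd t ht).continuousWithinAt, _, ?_, ?_, hd, ?_⟩, ?_⟩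
  · simp
  · intro t ht
    rcases eq_or_lt_of_le (show (0:ℝ) ≤ t from ht) with h | h
    · subst h
      rw [← continuousWithinAt_sdiff_self, Set.Ici_sdiff_left]
      unfold ContinuousWithinAt
      simp only [le_refl, if_true]
      refine squeeze_zero_norm' ?_ (lim0 b4 a1)
      filter_upwards [self_mem_nhdsWithin] with t ht
      simp only [not_le.mpr (show (0:ℝ) < t from ht), if_false]
      exact hvb t ht
    · apply ContinuousAt.continuousWithinAt
      have hc : ContinuousAt (fun t => VV A a1 b1 b2 b3 b4 (rs t)) t :=
        ContinuousAt.comp (g := VV A a1 b1 b2 b3 b4) (f := rs)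
          (VV_cont A a1 b1 b2 b3 b4 (rs t) hA hb1 hb2 hb3 hb4 (rs_pos t h))
          (rs_deriv t h).continuousAt
      refine hc.congr ?_
      filter_upwards [Ioi_mem_nhds h] with x hx
      simp only [not_le.mpr (show (0:ℝ) < x from hx), if_false]
  · have hpi := Real.pi_pos
    set c : ℝ := (4 * π / 3) ^ ((1:ℝ)/6) with hc
    have hcp : 0 < c := by positivity
    refine ⟨2 / b1 * c + 2 * a1 / b2, by positivity, ?_⟩
    intro t ht
    have ht6 : 0 ≤ t ^ ((1:ℝ)/6) := Real.rpow_nonneg ht _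
    rcases eq_or_lt_of_le ht with h | h
    · simp only [← h, le_refl, if_true, abs_zero]
      positivity
    · simp only [not_le.mpr h, if_false]
      have hr := rs_pos t h
      have hb := (VV_bd A a1 b1 b2 b3 b4 _ hA ha1 hb1 hb2 hb3 hb4 hr).trans
        (F_bd1 A a1 b1 b2 b3 b4 _ hA ha1 hb1 hb2 hb3 hb4 hr)
      have e : ((rs t) ^ ((1:ℝ)/2))⁻¹ = c * t ^ ((1:ℝ)/6) := by
        rw [rs_inv t h, Real.inv_rpow (by positivity), inv_inv, ← Real.rpow_mul (by positivity),
          hc, ← Real.mul_rpow (by positivity) ht]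
        congr 1
        · ring
        · norm_num
      rw [e] at hb
      have k1 : 0 ≤ 2 / b1 * c := by positivity
      have k2 : 0 ≤ 2 * a1 / b2 * t ^ ((1:ℝ)/6) := by positivity
      nlinarith
  · intro q hq1 hq2
    have hpi := Real.pi_pos
    set K : ℝ := 1 + 2 * A * (b1 + b2 + b3 + b4) with hK
    have hKp : 0 < K := by positivity
    set c : ℝ := (4 * π / 3) ^ ((1:ℝ)/3) with hc
    have hcp : 0 < c := by positivity
    have hneg : -(2 * A * a1 / K * c) < 0 := by
      have : 0 < 2 * A * a1 / K * c := by positivity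
      linarith
    refine lt_of_le_of_lt (b := ((-(2 * A * a1 / K * c) : ℝ) : EReal)) ?_ (by exact_mod_cast hneg)
    refine Filter.limsup_le_of_le (by isBoundedDefault) ?_
    have hmem : Set.Ioo (0:ℝ) (3 / (4 * π)) ∈ nhdsWithin (0:ℝ) (Set.Ioi 0) :=
      Ioo_mem_nhdsGT (by positivity)
    have hmem1 : Set.Ioo (0:ℝ) 1 ∈ nhdsWithin (0:ℝ) (Set.Ioi 0) :=
      Ioo_mem_nhdsGT (by norm_num)
    filter_upwards [hmem, hmem1] with t ht ht1
    have htp := ht.1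
    rw [EReal.coe_le_coe_iff]
    have hr := rs_pos t htp
    have hr1 : 1 ≤ rs t := by
      unfold rs
      apply Real.one_le_rpow _ (by norm_num)
      have := ht.2
      rw [lt_div_iff₀ (by positivity)] at this
      rw [le_div_iff₀ (by positivity)]
      linarith
    have hgp := GG_pos A b1 b2 b3 b4 (rs t) hA hb1 hb2 hb3 hb4 hr
    have hl := log_lb _ hgp
    have hk := K_bd A b1 b2 b3 b4 (rs t) hA hb1 hb2 hb3 hb4 hr1
    have hl2 : 1 / (K * rs t ^ 2) ≤ Real.log (1 + 1 / GG A b1 b2 b3 b4 (rs t)) :=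
      (one_div_le_one_div_of_le (by positivity) hk).trans hl
    have hri : (rs t)⁻¹ = c * t ^ ((1:ℝ)/3) := by
      rw [rs_inv t htp, inv_inv, hc, ← Real.mul_rpow (by positivity) htp.le]
      congr 1
      ring
    have htq : t ^ q ≤ t * t ^ ((1:ℝ)/3) := by
      have : t * t ^ ((1:ℝ)/3) = t ^ ((4:ℝ)/3) := by
        rw [show (4:ℝ)/3 = 1 + 1/3 by norm_num, Real.rpow_add htp, Real.rpow_one]
      rw [this]
      exact Real.rpow_le_rpow_of_exponent_ge htp ht1.2.le hq1.le
    have htqp : 0 < t ^ q := by positivity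
    rw [div_le_iff₀ htqp, ecpos t htp]
    set L := Real.log (1 + 1 / GG A b1 b2 b3 b4 (rs t))
    have s1 : 2 * A * a1 / K * c * t ^ q ≤ 2 * A * a1 / K * c * (t * t ^ ((1:ℝ)/3)) :=
      mul_le_mul_of_nonneg_left htq (by positivity)
    have s2 : 2 * A * a1 / K * c * (t * t ^ ((1:ℝ)/3)) =
        t * (2 * A * (a1 * rs t)) * (1 / (K * rs t ^ 2)) := by
      have : 2 * A * a1 / K * c * (t * t ^ ((1:ℝ)/3)) = 2 * A * a1 / K * t * (rs t)⁻¹ := by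
        rw [hri]; ring
      rw [this]
      field_simp
    have s3 : t * (2 * A * (a1 * rs t)) * (1 / (K * rs t ^ 2)) ≤
        t * (2 * A * (a1 * rs t)) * L := mul_le_mul_of_nonneg_left hl2 (by positivity)
    have hL0 : 0 ≤ L := (log_bd _ hgp).1
    have s4 : 0 ≤ t * (2 * A) * L := by positivity
    linarith
end
end
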